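/- Fourier–Bohr coefficients for dense point sets: under the dense cut-and-project hypotheses, with f : ℝ^m → ℂ continuous and |x|^{m+1+α}|f(x)| ≤ C, for every k ∈ ℝ^d the limit c(k) = lim_{r→∞} (1/vol(B_r(0))) ∑_{x ∈ L ∩ B_r(a)} f(x*) e^{−2πi k·x} exists and is independent of a. If k ∈ L* = π₁((L̃)*) then c(k) = (1/|det(L̃)|) ∫_{ℝ^m} e^{2πi k*·u} f(u) du = (1/|det(L̃)|) f̂(−k*); if k ∉ L* then c(k) = 0. -/

import Mathlib

open MeasureTheory Metric Complex
open scoped RealInnerProductSpace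

/-- The projection of the lattice to direct space. -/
def physL (d m : ℕ) (L : Submodule ℤ (EuclideanSpace ℝ (Fin d) × EuclideanSpace ℝ (Fin m))) :
    Set (EuclideanSpace ℝ (Fin d)) :=
  Prod.fst '' (L : Set (EuclideanSpace ℝ (Fin d) × EuclideanSpace ℝ (Fin m)))

/-- The dual lattice of L̃ in ℝ^d × ℝ^m, w.r.t. the Euclidean pairing of the product. -/
def dualL (d m : ℕ) (L : Submodule ℤ (EuclideanSpace ℝ (Fin d) × EuclideanSpace ℝ (Fin m))) :
    Set (EuclideanSpace ℝ (Fin d) × EuclideanSpace ℝ (Fin m)) :=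
  {y | ∀ x ∈ L, ∃ n : ℤ, ⟪y.1, x.1⟫ + ⟪y.2, x.2⟫ = (n : ℝ)}

/-!
Smooth the indicator of the ball by convolution with a bump `φ`. The smoothed average of the point
set is then the ball average, along the subspace `E × {0}`, of the twist `𝐞 (-k t)` times the
function `Ψ` on `E × F` obtained by summing `φ x * 𝐞 (-k x) * f y` over all translates of the
lattice `L`. Since `Ψ` is continuous and `L`-periodic, trigonometric polynomials with frequencies
in the dual of `L` approximate it uniformly, and Weyl's argument computes the average: it vanishes
when `k` is not the restriction to `E` of an element of the dual. When `k` is such a restriction,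
the twist is absorbed into `f`. As the projection of `L` to `F` is dense, no nonzero element of the
dual vanishes on `E`, so `E × {0}` equidistributes modulo `L` and the average is the mean of `Ψ`,
which is computed by unfolding. The sharp indicator of radius `r` lies between the smoothed ones of
radii `r ± ρ`, and passing from `r` to `r ± ρ` does not affect the averages in the limit.
-/

section Development

open Filter Topology
open scoped FourierTransform

section BallAverages

theorem measureReal_closedBall_pos {X : Type*} [PseudoMetricSpace X] [ProperSpace X]
    [MeasurableSpace X] (μ : Measure X) [μ.IsOpenPosMeasure] [IsFiniteMeasureOnCompacts μ]
    (a : X) {r : ℝ} (hr : 0 < r) : 0 < μ.real (closedBall a r) :=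
  ENNReal.toReal_pos (measure_closedBall_pos μ a hr).ne' measure_closedBall_lt_top.ne

variable {E : Type*} [NormedAddCommGroup E] [NormedSpace ℝ E] [FiniteDimensional ℝ E]
  [MeasurableSpace E] [BorelSpace E] (μ : Measure E) [μ.IsAddHaarMeasure]

theorem tendsto_measureReal_closedBall_add_div (a b : E) (c : ℝ) :
    Tendsto (fun r => μ.real (closedBall a (r + c)) / μ.real (closedBall b r)) atTop (𝓝 1) := by
  have hlim : Tendsto (fun r : ℝ => (1 + c * r⁻¹) ^ Module.finrank ℝ E) atTop (𝓝 1) := by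
    simpa using ((tendsto_inv_atTop_zero (𝕜 := ℝ)).const_mul c).const_add 1 |>.pow _
  refine hlim.congr' ?_
  filter_upwards [eventually_gt_atTop 0, eventually_ge_atTop (-c)] with r hr hrc
  have hball : μ.real (closedBall (0 : E) 1) ≠ 0 := (measureReal_closedBall_pos μ 0 one_pos).ne'
  rw [Measure.addHaar_real_closedBall' μ a (by linarith),
    Measure.addHaar_real_closedBall' μ b hr.le,
    mul_div_mul_right _ _ (by simpa [measureReal_def] using hball), ← div_pow]
  congr 1
  field_simp

variable {G : Type*} [NormedAddCommGroup G] [NormedSpace ℝ G]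

theorem norm_setIntegral_sub_setIntegral_le {X : Type*} [MeasurableSpace X] {ν : Measure X}
    {h : X → G} {C : ℝ} {s t : Set X} (hst : s ⊆ t) (hs : MeasurableSet s) (ht : ν t ≠ ⊤)
    (hh : AEStronglyMeasurable h ν) (hC : ∀ x, ‖h x‖ ≤ C) :
    ‖(∫ x in t, h x ∂ν) - ∫ x in s, h x ∂ν‖ ≤ C * (ν.real t - ν.real s) := by
  have hint : IntegrableOn h t ν :=
    IntegrableOn.of_bound ht.lt_top hh.restrict C (Eventually.of_forall hC)
  rw [← setIntegral_sdiff hs hint hst, ← measureReal_sdiff hst hs ht]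
  exact norm_setIntegral_le_of_norm_le_const
    ((measure_mono Set.sdiff_subset).trans_lt ht.lt_top) fun x _ => hC x

theorem tendsto_setAverage_closedBall_comp_add_sub {h : E → G} {C : ℝ}
    (hh : AEStronglyMeasurable h μ) (hC : ∀ t, ‖h t‖ ≤ C) (a s : E) :
    Tendsto (fun r => (⨍ t in closedBall a r, h (t + s) ∂μ) - ⨍ t in closedBall a r, h t ∂μ)
      atTop (𝓝 0) := by
  have hlim : Tendsto (fun r => 2 * C * (μ.real (closedBall a (r + ‖s‖)) /
      μ.real (closedBall a r) - 1)) atTop (𝓝 0) := by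
    simpa using ((tendsto_measureReal_closedBall_add_div μ a a ‖s‖).sub_const 1).const_mul (2 * C)
  refine squeeze_zero_norm' ?_ hlim
  filter_upwards [eventually_gt_atTop 0] with r hr
  have htranslate : ∫ t in closedBall a r, h (t + s) ∂μ = ∫ t in closedBall (a + s) r, h t ∂μ := by
    rw [← (measurePreserving_add_right μ s).setIntegral_preimage_emb
      (measurableEmbedding_addRight s) h (closedBall (a + s) r), preimage_add_right_closedBall,
      add_sub_cancel_right]
  have hdiff (b : E) (hb : closedBall b r ⊆ closedBall a (r + ‖s‖)) :
      ‖(∫ t in closedBall a (r + ‖s‖), h t ∂μ) - ∫ t in closedBall b r, h t ∂μ‖ ≤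
        C * (μ.real (closedBall a (r + ‖s‖)) - μ.real (closedBall a r)) := by
    simpa only [Measure.addHaar_real_closedBall_center μ b,
      Measure.addHaar_real_closedBall_center μ a] using
      norm_setIntegral_sub_setIntegral_le hb measurableSet_closedBall
        measure_closedBall_lt_top.ne hh hC
  have hball := measureReal_closedBall_pos μ a hr
  rw [setAverage_eq, setAverage_eq, htranslate, ← smul_sub, norm_smul, norm_inv,
    Real.norm_of_nonneg hball.le, inv_mul_le_iff₀ hball,
    ← sub_sub_sub_cancel_left _ _ (∫ t in closedBall a (r + ‖s‖), h t ∂μ)]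
  calc _ ≤ _ := norm_sub_le _ _
    _ ≤ _ := add_le_add (hdiff a (closedBall_subset_closedBall (by simp)))
        (hdiff (a + s) (closedBall_subset_closedBall' (by simp [dist_eq_norm])))
    _ = _ := by field_simp; ring

theorem exists_apply_eq_of_ne_zero {V : Type*} [NormedAddCommGroup V] [NormedSpace ℝ V]
    {ℓ : StrongDual ℝ V} (hℓ : ℓ ≠ 0) (c : ℝ) : ∃ v, ℓ v = c :=
  LinearMap.surjective (f := ℓ.toLinearMap) (by exact_mod_cast hℓ) c

theorem fourierChar_one_half : (𝐞 (1 / 2 : ℝ) : ℂ) = -1 := by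
  rw [Real.fourierChar_apply, ← exp_pi_mul_I]
  push_cast
  ring_nf

theorem tendsto_setAverage_closedBall_fourierChar {ℓ : StrongDual ℝ E} (hℓ : ℓ ≠ 0) (a : E) :
    Tendsto (fun r => ⨍ t in closedBall a r, (𝐞 (ℓ t) : ℂ) ∂μ) atTop (𝓝 0) := by
  obtain ⟨s, hs⟩ := exists_apply_eq_of_ne_zero hℓ (1 / 2)
  have hflip (t : E) : (𝐞 (ℓ (t + s)) : ℂ) = -𝐞 (ℓ t) := by
    rw [map_add, AddChar.map_add_eq_mul, Circle.coe_mul, hs, fourierChar_one_half, mul_neg_one]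
  have hcont : Continuous fun t => (𝐞 (ℓ t) : ℂ) := by fun_prop
  have h := tendsto_setAverage_closedBall_comp_add_sub μ hcont.aestronglyMeasurable
    (fun t => (Circle.norm_coe _).le) a s
  simp only [hflip, average_neg, ← neg_add', ← two_smul ℝ] at h
  simpa using h.neg.const_smul (2⁻¹ : ℝ)

end BallAverages

section TrigonometricApproximation

open scoped BoundedContinuousFunction

variable {V : Type*} [NormedAddCommGroup V] [NormedSpace ℝ V]

/-- The dual lattice of `L`, realised inside the dual space instead of through an inner product. -/
def integralDual (L : Submodule ℤ V) : Set (StrongDual ℝ V) :=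
  {ℓ | ∀ p ∈ L, ∃ n : ℤ, ℓ p = n}

theorem fourierChar_intCast (n : ℤ) : 𝐞 (n : ℝ) = 1 := by
  ext
  rw [Real.fourierChar_apply, Circle.coe_one, exp_eq_one_iff]
  exact ⟨n, by push_cast; ring⟩

theorem fourierChar_apply_add_of_mem_integralDual {L : Submodule ℤ V} {ℓ : StrongDual ℝ V}
    (hℓ : ℓ ∈ integralDual L) {p : V} (hp : p ∈ L) (z : V) : 𝐞 (ℓ (z + p)) = 𝐞 (ℓ z) := by
  obtain ⟨n, hn⟩ := hℓ p hp
  rw [map_add, AddChar.map_add_eq_mul, hn, fourierChar_intCast, mul_one]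

/-- The character `z ↦ exp (2πi ℓ(z))`, as an element of the Banach space in which trigonometric
polynomials approximate periodic functions. -/
noncomputable def trigMonomial (ℓ : StrongDual ℝ V) : V →ᵇ ℂ :=
  .ofNormedAddCommGroup (fun z => (𝐞 (ℓ z) : ℂ)) (by fun_prop) 1 fun z => (Circle.norm_coe _).le

@[simp]
theorem trigMonomial_apply (ℓ : StrongDual ℝ V) (z : V) : trigMonomial ℓ z = 𝐞 (ℓ z) := rfl

variable {ι : Type*} [Fintype ι]

/-- The projection of `V` onto the torus `V ⧸ span ℤ (range B)`, in coordinates along `B`. -/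
noncomputable def basisToTorus [FiniteDimensional ℝ V] (B : Module.Basis ι ℝ V) :
    C(V, UnitAddTorus ι) where
  toFun z i := (B.equivFunL z i : UnitAddCircle)
  continuous_toFun := continuous_pi fun i =>
    (AddCircle.continuous_mk' 1).comp ((continuous_apply i).comp B.equivFunL.continuous)

/-- The functional of `V` with integer coordinates `n` in the basis dual to `B`. -/
noncomputable def integralFunctional (B : Module.Basis ι ℝ V) (n : ι → ℤ) :
    StrongDual ℝ V :=
  ∑ i, (n i : ℝ) • (ContinuousLinearMap.proj i ∘L B.equivFunL.toContinuousLinearMap)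

variable (B : Module.Basis ι ℝ V) (n : ι → ℤ)

theorem integralFunctional_apply (z : V) :
    integralFunctional B n z = ∑ i, n i * B.repr z i := by
  simp [integralFunctional]

theorem integralFunctional_mem_integralDual :
    integralFunctional B n ∈ integralDual (Submodule.span ℤ (Set.range B)) := by
  intro p hp
  choose c hc using (B.mem_span_iff_repr_mem ℤ p).1 hp
  exact ⟨∑ i, n i * c i, by simp [integralFunctional_apply, ← hc]⟩

variable [FiniteDimensional ℝ V]

theorem mFourier_basisToTorus (z : V) :
    UnitAddTorus.mFourier n (basisToTorus B z) = 𝐞 (integralFunctional B n z) := by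
  have hprod : (𝐞 (∑ i, n i * B.repr z i) : ℂ) = ∏ i, (𝐞 (n i * B.repr z i) : ℂ) :=
    map_prod (Circle.coeHom.comp Real.fourierChar.toMonoidHom) _ _
  rw [integralFunctional_apply, hprod]
  refine Finset.prod_congr rfl fun i _ => ?_
  rw [Real.fourierChar_apply]
  simp only [basisToTorus, ContinuousMap.coe_mk, fourier_coe_apply, Module.Basis.equivFunL_apply]
  push_cast
  ring_nf

theorem isQuotientMap_basisToTorus : IsQuotientMap (basisToTorus B) :=
  (IsOpenQuotientMap.piMap fun _ : ι =>
    QuotientAddGroup.isOpenQuotientMap_mk).isQuotientMap.comp B.equivFunL.toHomeomorph.isQuotientMap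

theorem sub_mem_span_of_basisToTorus_eq {z z' : V} (h : basisToTorus B z = basisToTorus B z') :
    z - z' ∈ Submodule.span ℤ (Set.range B) := by
  refine (B.mem_span_iff_repr_mem ℤ _).2 fun i => ?_
  have hi : ((B.repr z i - B.repr z' i : ℝ) : UnitAddCircle) = 0 := by
    rw [AddCircle.coe_sub, sub_eq_zero]
    exact congrFun h i
  obtain ⟨c, hc⟩ := (AddCircle.coe_eq_zero_iff 1).1 hi
  exact ⟨c, by simpa using hc⟩

/-- Pullback of functions along `basisToTorus B`. -/
noncomputable def torusPullback : C(UnitAddTorus ι, ℂ) →ₗ[ℂ] V →ᵇ ℂ where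
  toFun Φ := (BoundedContinuousFunction.mkOfCompact Φ).compContinuous (basisToTorus B)
  map_add' _ _ := rfl
  map_smul' _ _ := rfl

theorem continuous_torusPullback : Continuous (torusPullback B) :=
  (BoundedContinuousFunction.continuous_compContinuous _).comp
    (Isometry.of_dist_eq BoundedContinuousFunction.dist_mkOfCompact).continuous

theorem torusPullback_mem_closure_span (Φ : C(UnitAddTorus ι, ℂ)) :
    torusPullback B Φ ∈ closure (Submodule.span ℂ
      (trigMonomial '' integralDual (Submodule.span ℤ (Set.range B))) : Set (V →ᵇ ℂ)) := by
  have hΦ : Φ ∈ (Submodule.span ℂ (Set.range UnitAddTorus.mFourier)).topologicalClosure := by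
    rw [UnitAddTorus.span_mFourier_closure_eq_top]
    exact Submodule.mem_top
  refine map_mem_closure (continuous_torusPullback B) hΦ fun P hP => ?_
  refine (Submodule.span_le (p := (Submodule.span ℂ _).comap (torusPullback B))).2 ?_ hP
  rintro _ ⟨n, rfl⟩
  refine Submodule.subset_span ⟨_, integralFunctional_mem_integralDual B n, ?_⟩
  ext z
  exact (mFourier_basisToTorus B n z).symm

theorem exists_mem_closure_span_trigMonomial_of_periodic (L : Submodule ℤ V) [DiscreteTopology L]
    [IsZLattice ℝ L] {Ψ : V → ℂ} (hΨ : Continuous Ψ) (hper : ∀ p ∈ L, ∀ z, Ψ (z + p) = Ψ z) :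
    ∃ g ∈ closure (Submodule.span ℂ (trigMonomial '' integralDual L) : Set (V →ᵇ ℂ)), ⇑g = Ψ := by
  have := ZLattice.module_free ℝ L
  have := ZLattice.module_finite ℝ L
  let b := Module.Free.chooseBasis ℤ L
  let B := b.ofZLatticeBasis ℝ L
  have hspan : Submodule.span ℤ (Set.range B) = L := b.ofZLatticeBasis_span ℝ L
  have hfac : Function.FactorsThrough (⟨Ψ, hΨ⟩ : C(V, ℂ)) (basisToTorus B) := fun z z' h => by
    change Ψ z = Ψ z'
    rw [← hper _ (hspan ▸ sub_mem_span_of_basisToTorus_eq B h) z', add_sub_cancel]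
  let Φ := (isQuotientMap_basisToTorus B).lift ⟨Ψ, hΨ⟩ hfac
  have hmem := torusPullback_mem_closure_span B Φ
  rw [hspan] at hmem
  refine ⟨torusPullback B Φ, hmem, funext fun z => ?_⟩
  exact DFunLike.congr_fun ((isQuotientMap_basisToTorus B).lift_comp ⟨Ψ, hΨ⟩ hfac) z

end TrigonometricApproximation

section WeylCriterion

open scoped BoundedContinuousFunction

theorem tendsto_of_mem_closure_span {α 𝕜 M N : Type*} [NontriviallyNormedField 𝕜]
    [SeminormedAddCommGroup M] [NormedSpace 𝕜 M] [SeminormedAddCommGroup N] [NormedSpace 𝕜 N]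
    {l : Filter α} {A : α → M →L[𝕜] N} {A₀ : M →L[𝕜] N} {C : ℝ} (hA : ∀ i, ‖A i‖ ≤ C) {s : Set M}
    (hs : ∀ x ∈ s, Tendsto (fun i => A i x) l (𝓝 (A₀ x))) {x : M}
    (hx : x ∈ closure (Submodule.span 𝕜 s : Set M)) : Tendsto (fun i => A i x) l (𝓝 (A₀ x)) := by
  have hequi : (∃ C, ∀ i, ‖A i‖ ≤ C) ↔ Equicontinuous ((↑) ∘ A) :=
    (NormedSpace.equicontinuous_TFAE A).out 5 1
  refine closure_minimal (fun y hy => ?_)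
    ((hequi.1 ⟨C, hA⟩).isClosed_setOfPred_tendsto A₀.continuous) hx
  change Tendsto (fun i => A i y) l (𝓝 (A₀ y))
  induction hy using Submodule.span_induction with
  | mem y hy => exact hs y hy
  | zero => simpa only [map_zero] using tendsto_const_nhds
  | add y z _ _ hy hz => simpa only [map_add] using hy.add hz
  | smul c y _ hy => simpa only [map_smul] using hy.const_smul c

variable {V X : Type*} [NormedAddCommGroup V] [MeasurableSpace V] [BorelSpace V]
  [MeasurableSpace X] {w : X → ℂ} {τ : X → V}

theorem integrable_mul_comp_boundedContinuousFunction (ν : Measure X) [IsFiniteMeasure ν]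
    (hw : Measurable w) (hw_le : ∀ x, ‖w x‖ ≤ 1) (hτ : Measurable τ) (g : V →ᵇ ℂ) :
    Integrable (fun x => w x * g (τ x)) ν := by
  refine .of_bound (hw.mul (g.continuous.measurable.comp hτ)).aestronglyMeasurable ‖g‖
    (Eventually.of_forall fun x => ?_)
  simpa using mul_le_mul (hw_le x) (g.norm_coe_le_norm (τ x)) (norm_nonneg _) zero_le_one

/-- The functional `g ↦ ∫ x, w x * g (τ x) ∂ν`; weighted averages of periodic functions along an
orbit `τ` are of this form. -/
noncomputable def weightedIntegral (ν : Measure X) [IsFiniteMeasure ν] (hw : Measurable w)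
    (hw_le : ∀ x, ‖w x‖ ≤ 1) (hτ : Measurable τ) : (V →ᵇ ℂ) →L[ℂ] ℂ :=
  LinearMap.mkContinuous
    { toFun := fun g => ∫ x, w x * g (τ x) ∂ν
      map_add' := fun g h => by
        simp only [BoundedContinuousFunction.coe_add, Pi.add_apply, mul_add]
        exact integral_add (integrable_mul_comp_boundedContinuousFunction ν hw hw_le hτ g)
          (integrable_mul_comp_boundedContinuousFunction ν hw hw_le hτ h)
      map_smul' := fun c g => by
        simp only [BoundedContinuousFunction.coe_smul, mul_smul_comm, integral_smul,
          RingHom.id_apply] }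
    (ν.real Set.univ) fun g => by
      rw [mul_comm]
      refine norm_integral_le_of_norm_le_const (Eventually.of_forall fun x => ?_)
      simpa using mul_le_mul (hw_le x) (g.norm_coe_le_norm (τ x)) (norm_nonneg _) zero_le_one

theorem weightedIntegral_apply (ν : Measure X) [IsFiniteMeasure ν] (hw : Measurable w)
    (hw_le : ∀ x, ‖w x‖ ≤ 1) (hτ : Measurable τ) (g : V →ᵇ ℂ) :
    weightedIntegral ν hw hw_le hτ g = ∫ x, w x * g (τ x) ∂ν := rfl

theorem norm_weightedIntegral_le (ν : Measure X) [IsZeroOrProbabilityMeasure ν]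
    (hw : Measurable w) (hw_le : ∀ x, ‖w x‖ ≤ 1) (hτ : Measurable τ) :
    ‖weightedIntegral ν hw hw_le hτ‖ ≤ 1 :=
  (LinearMap.mkContinuous_norm_le _ measureReal_nonneg _).trans measureReal_le_one

variable [NormedSpace ℝ V]

theorem tendsto_setAverage_of_trigMonomial {α : Type*} {l : Filter α} {ν : Measure X}
    {B : α → Set X} (hw : Measurable w) (hw_le : ∀ x, ‖w x‖ ≤ 1) (hτ : Measurable τ)
    {s : Set (StrongDual ℝ V)} (A : (V →ᵇ ℂ) →L[ℂ] ℂ)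
    (hA : ∀ ℓ ∈ s, Tendsto (fun i => ⨍ x in B i, w x * 𝐞 (ℓ (τ x)) ∂ν) l
      (𝓝 (A (trigMonomial ℓ))))
    {g : V →ᵇ ℂ} (hg : g ∈ closure (Submodule.span ℂ (trigMonomial '' s) : Set (V →ᵇ ℂ))) :
    Tendsto (fun i => ⨍ x in B i, w x * g (τ x) ∂ν) l (𝓝 (A g)) :=
  tendsto_of_mem_closure_span (A := fun i => weightedIntegral
      ((ν.restrict (B i) Set.univ)⁻¹ • ν.restrict (B i)) hw hw_le hτ)
    (fun _ => norm_weightedIntegral_le _ hw hw_le hτ) (Set.forall_mem_image.2 hA) hg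

end WeylCriterion

section LinearFlow

open scoped BoundedContinuousFunction

variable {V : Type*} [NormedAddCommGroup V] [MeasurableSpace V] [BorelSpace V] {ν : Measure V}
  {L : Submodule ℤ V}

open scoped Pointwise in
theorem setIntegral_fundamentalDomain_comp_add [ν.IsAddLeftInvariant] [Countable L] {F : Set V}
    (hF : IsAddFundamentalDomain L F ν) {Ψ : V → ℂ} (hper : ∀ p ∈ L, ∀ z, Ψ (z + p) = Ψ z)
    (v : V) : ∫ z in F, Ψ (z + v) ∂ν = ∫ z in F, Ψ z ∂ν := by
  have : VAddInvariantMeasure L V ν := inferInstanceAs (VAddInvariantMeasure L.toAddSubgroup V ν)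
  have hper' (p : L) (z : V) : Ψ (p +ᵥ z) = Ψ z := by
    rw [← hper p p.2 z, add_comm]
    rfl
  rw [← (hF.vadd_of_comm v).setIntegral_eq hF hper',
    ← (measurePreserving_add_right ν v).setIntegral_preimage_emb
      (measurableEmbedding_addRight v) Ψ (v +ᵥ F)]
  congr 2
  ext z
  simp [Set.mem_vadd_set_iff_neg_vadd_mem]

variable [NormedSpace ℝ V]

theorem setIntegral_fundamentalDomain_fourierChar [ν.IsAddLeftInvariant] [Countable L]
    {F : Set V} (hF : IsAddFundamentalDomain L F ν) {ℓ : StrongDual ℝ V}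
    (hℓ : ℓ ∈ integralDual L) (hℓ0 : ℓ ≠ 0) : ∫ z in F, (𝐞 (ℓ z) : ℂ) ∂ν = 0 := by
  obtain ⟨v, hv⟩ := exists_apply_eq_of_ne_zero hℓ0 (1 / 2)
  have hshift := setIntegral_fundamentalDomain_comp_add hF (Ψ := fun z => (𝐞 (ℓ z) : ℂ))
    (fun p hp z => by rw [fourierChar_apply_add_of_mem_integralDual hℓ hp]) v
  simp only [map_add, AddChar.map_add_eq_mul, Circle.coe_mul, hv, fourierChar_one_half,
    mul_neg_one, integral_neg] at hshift
  exact CharZero.neg_eq_self_iff.1 hshift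

variable [FiniteDimensional ℝ V] {E : Type*} [NormedAddCommGroup E] [NormedSpace ℝ E]
  [FiniteDimensional ℝ E] [MeasurableSpace E] [BorelSpace E] (μ : Measure E) [μ.IsAddHaarMeasure]
  (j : E →L[ℝ] V) (a : E) [DiscreteTopology L] [IsZLattice ℝ L]

theorem tendsto_setAverage_flow [ν.IsAddHaarMeasure] {F : Set V}
    (hF : IsAddFundamentalDomain L F ν) (hF_fin : ν F ≠ ⊤)
    (hj : ∀ ℓ ∈ integralDual L, ℓ.comp j = 0 → ℓ = 0)
    {Ψ : V → ℂ} (hΨ : Continuous Ψ) (hper : ∀ p ∈ L, ∀ z, Ψ (z + p) = Ψ z) :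
    Tendsto (fun r => ⨍ t in closedBall a r, Ψ (j t) ∂μ) atTop (𝓝 (⨍ z in F, Ψ z ∂ν)) := by
  have := ZLattice.module_finite ℝ L
  have : VAddInvariantMeasure L V ν := inferInstanceAs (VAddInvariantMeasure L.toAddSubgroup V ν)
  obtain ⟨g, hg, rfl⟩ := exists_mem_closure_span_trigMonomial_of_periodic L hΨ hper
  have hF0 : ν F ≠ 0 := hF.measure_ne_zero (NeZero.ne ν)
  let A : (V →ᵇ ℂ) →L[ℂ] ℂ := weightedIntegral (w := fun _ => 1)
    ((ν.restrict F Set.univ)⁻¹ • ν.restrict F) measurable_const (by simp) measurable_id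
  have hA (g : V →ᵇ ℂ) : A g = ⨍ z in F, g z ∂ν := by
    simp [A, weightedIntegral_apply, average]
  suffices hmonomial : ∀ ℓ ∈ integralDual L, Tendsto
      (fun r => ⨍ t in closedBall a r, (𝐞 (ℓ (j t)) : ℂ) ∂μ) atTop (𝓝 (A (trigMonomial ℓ))) by
    rw [← hA]
    simpa only [one_mul] using tendsto_setAverage_of_trigMonomial
      (w := fun _ => 1) measurable_const (by simp) j.continuous.measurable A
      (by simpa only [one_mul] using hmonomial) hg
  intro ℓ hℓ
  by_cases hℓ0 : ℓ = 0
  · refine tendsto_const_nhds.congr' ?_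
    filter_upwards [eventually_gt_atTop 0] with r hr
    simp [hA, hℓ0, setAverage_const hF0 hF_fin, setAverage_const
      (measure_closedBall_pos μ a hr).ne' measure_closedBall_lt_top.ne]
  · have h0 : A (trigMonomial ℓ) = 0 := by
      simp [hA, setAverage_eq, setIntegral_fundamentalDomain_fourierChar hF hℓ hℓ0]
    simpa [h0] using tendsto_setAverage_closedBall_fourierChar μ (mt (hj ℓ hℓ) hℓ0) a

theorem tendsto_setAverage_flow_twisted {k : StrongDual ℝ E}
    (hk : ∀ ℓ ∈ integralDual L, ℓ.comp j ≠ k)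
    {Ψ : V → ℂ} (hΨ : Continuous Ψ) (hper : ∀ p ∈ L, ∀ z, Ψ (z + p) = Ψ z) :
    Tendsto (fun r => ⨍ t in closedBall a r, 𝐞 (-k t) * Ψ (j t) ∂μ) atTop (𝓝 0) := by
  obtain ⟨g, hg, rfl⟩ := exists_mem_closure_span_trigMonomial_of_periodic L hΨ hper
  refine tendsto_setAverage_of_trigMonomial (w := fun t => (𝐞 (-k t) : ℂ))
    (Continuous.measurable (by fun_prop)) (fun t => (Circle.norm_coe _).le)
    j.continuous.measurable 0 (fun ℓ hℓ => ?_) hg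
  simpa [sub_eq_neg_add, AddChar.map_add_eq_mul] using
    tendsto_setAverage_closedBall_fourierChar μ (sub_ne_zero.2 (hk ℓ hℓ)) a

end LinearFlow


section WienerAmalgam

theorem exists_one_add_norm_rpow_mul_le {V G : Type*} [SeminormedAddCommGroup V] [ProperSpace V]
    [SeminormedAddCommGroup G] {g : V → G} {s C : ℝ} (hs : 0 ≤ s) (hg : Continuous g)
    (hdecay : ∀ x, ‖x‖ ^ s * ‖g x‖ ≤ C) : ∃ K, ∀ x, (1 + ‖x‖) ^ s * ‖g x‖ ≤ K := by
  obtain ⟨B, hB⟩ := (isCompact_closedBall (0 : V) 1).exists_bound_of_continuousOn hg.continuousOn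
  refine ⟨2 ^ s * max B C, fun x => ?_⟩
  have hsplit : max 1 ‖x‖ ^ s * ‖g x‖ ≤ max B C := by
    rcases le_total ‖x‖ 1 with hx | hx
    · simpa [hx] using Or.inl (hB x (mem_closedBall_zero_iff.2 hx))
    · simpa [hx] using Or.inr (hdecay x)
  calc (1 + ‖x‖) ^ s * ‖g x‖ ≤ (2 * max 1 ‖x‖) ^ s * ‖g x‖ := by
        gcongr
        linarith [le_max_left 1 ‖x‖, le_max_right 1 ‖x‖]
    _ = 2 ^ s * (max 1 ‖x‖ ^ s * ‖g x‖) := by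
        rw [Real.mul_rpow zero_le_two (zero_le_one.trans (le_max_left _ _)), mul_assoc]
    _ ≤ 2 ^ s * max B C := by gcongr

variable {V : Type*} [NormedAddCommGroup V] [MeasurableSpace V] {ν : Measure V}
  {G : Type*} [NormedAddCommGroup G] {g : V → G}

/-- Membership of a function in the Wiener amalgam space `W(L^∞, L^1)`: the supremum of `‖g‖` over
balls of any fixed radius is dominated by an integrable function of the centre. This is the decay
that makes the sums of `g` over all translates of a lattice converge locally uniformly. -/
def IsWienerAmalgam (g : V → G) (ν : Measure V) : Prop :=
  ∀ R : ℝ, ∃ W : V → ℝ, Integrable W ν ∧ ∀ x w, ‖w‖ ≤ R → ‖g (x + w)‖ ≤ W x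

theorem IsWienerAmalgam.mono {H : Type*} [NormedAddCommGroup H] {h : V → H}
    (hg : IsWienerAmalgam g ν) (hle : ∀ x, ‖h x‖ ≤ ‖g x‖) : IsWienerAmalgam h ν := fun R =>
  (hg R).imp fun _ hW => ⟨hW.1, fun x w hw => (hle _).trans (hW.2 x w hw)⟩

theorem IsWienerAmalgam.integrable (hg : IsWienerAmalgam g ν) (hgm : AEStronglyMeasurable g ν) :
    Integrable g ν := by
  obtain ⟨W, hW, hgW⟩ := hg 0
  exact hW.mono' hgm (Eventually.of_forall fun x => by simpa using hgW x 0)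

theorem IsWienerAmalgam.mul_prod {V' : Type*} [NormedAddCommGroup V'] [MeasurableSpace V']
    {ν' : Measure V'} {A : Type*} [NormedRing A] {f : V → A} {g : V' → A}
    (hf : IsWienerAmalgam f ν) (hg : IsWienerAmalgam g ν') :
    IsWienerAmalgam (fun z : V × V' => f z.1 * g z.2) (ν.prod ν') := fun R => by
  obtain ⟨W, hW, hfW⟩ := hf R
  obtain ⟨W', hW', hgW'⟩ := hg R
  refine ⟨fun z => W z.1 * W' z.2, hW.mul_prod hW', fun x w hw => ?_⟩
  have hfx := hfW x.1 w.1 ((norm_fst_le w).trans hw)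
  exact (norm_mul_le _ _).trans (mul_le_mul hfx (hgW' x.2 w.2 ((norm_snd_le w).trans hw))
    (norm_nonneg _) ((norm_nonneg _).trans hfx))

theorem isWienerAmalgam_of_hasCompactSupport [ProperSpace V] [OpensMeasurableSpace V]
    [IsFiniteMeasureOnCompacts ν] (hg : Continuous g) (hg_supp : HasCompactSupport g) :
    IsWienerAmalgam g ν := fun R => by
  obtain ⟨C, hC⟩ := hg_supp.exists_bound_of_continuous hg
  obtain ⟨D, hD⟩ := hg_supp.isCompact.isBounded.subset_closedBall 0
  refine ⟨(closedBall 0 (D + R)).indicator fun _ => C,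
    (integrable_indicator_iff measurableSet_closedBall).2
      (integrableOn_const measure_closedBall_lt_top.ne), fun x w hw => ?_⟩
  by_cases hx : x ∈ closedBall 0 (D + R)
  · simpa only [Set.indicator_of_mem hx] using hC _
  · have hxw : x + w ∉ tsupport g := fun hmem => hx <| by
      have hD' := mem_closedBall_zero_iff.1 (hD hmem)
      have := norm_sub_le (x + w) w
      rw [mem_closedBall_zero_iff]
      rw [add_sub_cancel_right] at this
      linarith
    rw [Set.indicator_of_notMem hx, image_eq_zero_of_notMem_tsupport hxw, norm_zero]

variable [NormedSpace ℝ V] [FiniteDimensional ℝ V] [BorelSpace V] [ν.IsAddHaarMeasure]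

theorem isWienerAmalgam_of_rpow_mul_norm_le {s C : ℝ} (hs : Module.finrank ℝ V < s)
    (hg : Continuous g) (hdecay : ∀ x, ‖x‖ ^ s * ‖g x‖ ≤ C) : IsWienerAmalgam g ν := fun R => by
  have hs0 : 0 < s := (Nat.cast_nonneg _).trans_lt hs
  obtain ⟨K, hK⟩ := exists_one_add_norm_rpow_mul_le hs0.le hg hdecay
  refine ⟨fun x => (1 + R) ^ s * K * (1 + ‖x‖) ^ (-s),
    (integrable_one_add_norm hs).const_mul _, fun x w hw => ?_⟩
  have hR : 0 ≤ R := (norm_nonneg w).trans hw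
  have hx : 1 + ‖x‖ ≤ (1 + R) * (1 + ‖x + w‖) := by
    have := norm_sub_le (x + w) w
    rw [add_sub_cancel_right] at this
    nlinarith [mul_nonneg hR (norm_nonneg (x + w))]
  beta_reduce
  rw [Real.rpow_neg (by positivity), ← div_eq_mul_inv, le_div_iff₀ (by positivity)]
  calc ‖g (x + w)‖ * (1 + ‖x‖) ^ s
      ≤ ‖g (x + w)‖ * ((1 + R) * (1 + ‖x + w‖)) ^ s := by gcongr
    _ = (1 + R) ^ s * ((1 + ‖x + w‖) ^ s * ‖g (x + w)‖) := by
        rw [Real.mul_rpow (by positivity) (by positivity)]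
        ring
    _ ≤ (1 + R) ^ s * K := by gcongr; exact hK _

variable (L : Submodule ℤ V) [DiscreteTopology L] [IsZLattice ℝ L]

theorem exists_measurable_bounded_isAddFundamentalDomain (ν : Measure V) :
    ∃ F : Set V, MeasurableSet F ∧ Bornology.IsBounded F ∧ IsAddFundamentalDomain L F ν := by
  have := ZLattice.module_free ℝ L
  have := ZLattice.module_finite ℝ L
  let b := Module.Free.chooseBasis ℤ L
  exact ⟨ZSpan.fundamentalDomain (b.ofZLatticeBasis ℝ L), ZSpan.fundamentalDomain_measurableSet _,
    ZSpan.fundamentalDomain_isBounded _, ZLattice.isAddFundamentalDomain b ν⟩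

open scoped Pointwise in
theorem IsWienerAmalgam.exists_summable_bound (hg : IsWienerAmalgam g ν) (R : ℝ) :
    ∃ u : L → ℝ, Summable u ∧ ∀ (p : L) (z : V), ‖z‖ ≤ R → ‖g (p - z)‖ ≤ u p := by
  have := ZLattice.module_finite ℝ L
  have : VAddInvariantMeasure L V ν := inferInstanceAs (VAddInvariantMeasure L.toAddSubgroup V ν)
  obtain ⟨F, hF_meas, hF_bdd, hF⟩ := exists_measurable_bounded_isAddFundamentalDomain L ν
  obtain ⟨D, hD⟩ := hF_bdd.subset_closedBall 0
  obtain ⟨W, hW, hgW⟩ := hg (R + D)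
  have hF_pos : 0 < ν.real F :=
    ENNReal.toReal_pos (hF.measure_ne_zero (NeZero.ne ν)) hF_bdd.measure_lt_top.ne
  have hsum := (hasSum_integral_iUnion_ae hF.nullMeasurableSet_vadd hF.aedisjoint
    hW.integrableOn).summable
  refine ⟨fun p : L => (∫ x in p +ᵥ F, W x ∂ν) / ν.real F, hsum.div_const _, fun p z hz => ?_⟩
  have hvol : ν (p +ᵥ F) = ν F := measure_vadd ν p F
  have hle : ∀ x ∈ p +ᵥ F, ‖g (p - z)‖ ≤ W x := by
    rintro _ ⟨w, hw, rfl⟩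
    have hw' : ‖-z - w‖ ≤ R + D := by
      simpa using (norm_sub_le _ _).trans
        (add_le_add ((norm_neg z).trans_le hz) (mem_closedBall_zero_iff.1 (hD hw)))
    have hsub : (p : V) - z = (p : V) + w + (-z - w) := by abel
    rw [hsub]
    exact hgW _ _ hw'
  rw [le_div_iff₀ hF_pos]
  simpa only [measureReal_def, hvol] using setIntegral_ge_of_const_le_real
    (hF_meas.const_vadd p) (hvol.trans_ne hF_bdd.measure_lt_top.ne) hle hW.integrableOn

end WienerAmalgam

section Periodization

variable {V : Type*} [NormedAddCommGroup V] (L : Submodule ℤ V)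

/-- The `L`-periodic function obtained by summing the reflection of `g` over all translates by
elements of `L`. -/
noncomputable def periodization (g : V → ℂ) (z : V) : ℂ := ∑' p : L, g (p - z)

theorem periodization_add_of_mem (g : V → ℂ) {p : V} (hp : p ∈ L) (z : V) :
    periodization L g (z + p) = periodization L g z := by
  rw [periodization, ← (Equiv.addRight (⟨p, hp⟩ : L)).tsum_eq]
  simp [periodization]

variable [NormedSpace ℝ V] [FiniteDimensional ℝ V] [MeasurableSpace V] [BorelSpace V]
  {ν : Measure V} [ν.IsAddHaarMeasure] [DiscreteTopology L] [IsZLattice ℝ L] {g : V → ℂ}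

theorem continuous_periodization (hg : Continuous g) (hg_decay : IsWienerAmalgam g ν) :
    Continuous (periodization L g) := by
  refine continuous_iff_continuousAt.2 fun z => ?_
  obtain ⟨u, hu, hgu⟩ := hg_decay.exists_summable_bound L (‖z‖ + 1)
  refine (continuousOn_tsum (s := closedBall 0 (‖z‖ + 1)) (fun p => by fun_prop) hu
    fun p x hx => hgu p x (mem_closedBall_zero_iff.1 hx)).continuousAt ?_
  exact closedBall_mem_nhds_of_mem (by simp)

theorem hasSum_integral_mul_periodization {X : Type*} [MeasurableSpace X] {κ : Measure X}
    [IsFiniteMeasure κ] (hg : Continuous g) (hg_decay : IsWienerAmalgam g ν) {τ : X → V} {R : ℝ}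
    (hτ : AEStronglyMeasurable τ κ) (hτR : ∀ᵐ x ∂κ, ‖τ x‖ ≤ R) {w : X → ℂ}
    (hw : AEStronglyMeasurable w κ) (hw_le : ∀ x, ‖w x‖ ≤ 1) :
    HasSum (fun p : L => ∫ x, w x * g (p - τ x) ∂κ) (∫ x, w x * periodization L g (τ x) ∂κ) := by
  have := ZLattice.module_finite ℝ L
  obtain ⟨u, hu, hgu⟩ := hg_decay.exists_summable_bound L R
  refine hasSum_integral_of_dominated_convergence (fun p _ => u p)
    (fun p => hw.mul (hg.comp_aestronglyMeasurable (aestronglyMeasurable_const.sub hτ)))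
    (fun p => ?_) (Eventually.of_forall fun _ => hu) (integrable_const _) ?_
  · filter_upwards [hτR] with x hx
    simpa using mul_le_mul (hw_le x) (hgu p _ hx) (norm_nonneg _) zero_le_one
  · filter_upwards [hτR] with x hx
    exact (Summable.of_norm_bounded hu fun p => hgu p _ hx).hasSum.mul_left _

theorem setAverage_periodization (hg : Continuous g) (hg_decay : IsWienerAmalgam g ν)
    {F : Set V} (hF_meas : MeasurableSet F) (hF_bdd : Bornology.IsBounded F)
    (hF : IsAddFundamentalDomain L F ν) :
    ⨍ z in F, periodization L g z ∂ν = (ZLattice.covolume L ν)⁻¹ • ∫ z, g z ∂ν := by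
  have := ZLattice.module_finite ℝ L
  have : VAddInvariantMeasure L V ν := inferInstanceAs (VAddInvariantMeasure L.toAddSubgroup V ν)
  have : IsFiniteMeasure (ν.restrict F) := ⟨by simpa using hF_bdd.measure_lt_top⟩
  obtain ⟨D, hD⟩ := hF_bdd.subset_closedBall 0
  have hsum := hasSum_integral_mul_periodization L hg hg_decay (κ := ν.restrict F) (w := fun _ => 1)
    aestronglyMeasurable_id (ae_restrict_of_forall_mem hF_meas fun z hz =>
      mem_closedBall_zero_iff.1 (hD hz)) aestronglyMeasurable_const (by simp)
  have hunfold := hF.integral_eq_tsum' (fun z => g (-z))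
    (hg_decay.integrable hg.aestronglyMeasurable).comp_neg
  have hsub (p : L) (z : V) : -(-p +ᵥ z) = p - z := by
    change -(-(p : V) + z) = p - z
    abel
  simp only [hsub, integral_neg_eq_self g ν] at hunfold
  simp only [one_mul, id] at hsum
  rw [setAverage_eq, ZLattice.covolume_eq_measure_fundamentalDomain L ν hF, hunfold, hsum.tsum_eq]

end Periodization

section Smoothing

theorem tendsto_inv_smul_add {G : Type*} [NormedAddCommGroup G] [NormedSpace ℝ G] {v : ℝ → ℝ}
    {T : ℝ → G} {A : G} {c : ℝ} (hv : Tendsto (fun r => v (r + c) / v r) atTop (𝓝 1))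
    (hT : Tendsto (fun r => (v r)⁻¹ • T r) atTop (𝓝 A)) :
    Tendsto (fun r => (v r)⁻¹ • T (r + c)) atTop (𝓝 A) := by
  have h := hv.smul (hT.comp (tendsto_atTop_add_const_right _ c tendsto_id))
  rw [one_smul] at h
  refine h.congr' ?_
  filter_upwards [hv.eventually_ne one_ne_zero] with r hr
  have hvr : v (r + c) ≠ 0 := fun h0 => hr (by rw [h0, zero_div])
  simp only [Function.comp_apply, id, smul_smul]
  congr 1
  field_simp

theorem tendsto_inv_smul_tsum_of_le_of_le {I G : Type*} [NormedAddCommGroup G] [NormedSpace ℝ G]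
    [CompleteSpace G] {v : ℝ → ℝ} {S χ : ℝ → I → ℝ} {w : I → G} {ρ A : ℝ} {c : G}
    (hv : ∀ c, Tendsto (fun r => v (r + c) / v r) atTop (𝓝 1))
    (hlower : ∀ r i, S (r - ρ) i ≤ χ r i) (hupper : ∀ r i, χ r i ≤ S (r + ρ) i)
    (hsum : ∀ r, Summable fun i => S r i * ‖w i‖)
    (hA : Tendsto (fun r => (v r)⁻¹ • ∑' i, S r i * ‖w i‖) atTop (𝓝 A))
    (hc : Tendsto (fun r => (v r)⁻¹ • ∑' i, S r i • w i) atTop (𝓝 c)) :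
    Tendsto (fun r => (v r)⁻¹ • ∑' i, χ r i • w i) atTop (𝓝 c) := by
  have hgap (r : ℝ) : ‖(∑' i, χ r i • w i) - ∑' i, S (r + ρ) i • w i‖ ≤
      (∑' i, S (r + ρ) i * ‖w i‖) - ∑' i, S (r - ρ) i * ‖w i‖ := by
    have hterm (i : I) : ‖χ r i • w i - S (r + ρ) i • w i‖ ≤
        S (r + ρ) i * ‖w i‖ - S (r - ρ) i * ‖w i‖ := by
      rw [← sub_smul, ← sub_mul, norm_smul, Real.norm_of_nonpos (sub_nonpos.2 (hupper r i))]
      gcongr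
      linarith [hlower r i]
    have hbound := (hsum (r + ρ)).hasSum.sub (hsum (r - ρ)).hasSum
    have hS : Summable fun i => S (r + ρ) i • w i :=
      Summable.of_norm ((hsum (r + ρ)).abs.congr fun i => by simp [norm_smul, abs_mul])
    have hdiff := Summable.of_norm_bounded hbound.summable hterm
    have hχ : Summable fun i => χ r i • w i := by simpa using hdiff.add hS
    rw [← hχ.tsum_sub hS]
    exact tsum_of_norm_bounded hbound hterm
  have hsmooth := tendsto_inv_smul_add (hv ρ) hc
  suffices hzero : Tendsto (fun r => (v r)⁻¹ • ∑' i, χ r i • w i -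
      (v r)⁻¹ • ∑' i, S (r + ρ) i • w i) atTop (𝓝 0) by
    simpa using hzero.add hsmooth
  have hlim := ((tendsto_inv_smul_add (hv ρ) hA).sub (tendsto_inv_smul_add (hv (-ρ)) hA)).norm
  rw [sub_self, norm_zero] at hlim
  refine squeeze_zero_norm (fun r => ?_) hlim
  rw [← smul_sub, ← smul_sub, norm_smul, norm_smul, ← sub_eq_add_neg]
  exact mul_le_mul_of_nonneg_left ((hgap r).trans (le_abs_self _)) (norm_nonneg _)

variable {E : Type*} [NormedAddCommGroup E] [NormedSpace ℝ E] [FiniteDimensional ℝ E]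
  [MeasurableSpace E] (φ : ContDiffBump (0 : E)) (μ : Measure E)

/-- The indicator function of `closedBall a r`, smoothed by convolution with the bump `φ`. -/
noncomputable def smoothedIndicator (a : E) (r : ℝ) (x : E) : ℝ :=
  ∫ t in closedBall a r, φ.normed μ (x - t) ∂μ

variable [BorelSpace E] [μ.IsAddHaarMeasure]

theorem setIntegral_normed_sub_eq_one {s : Set E} {x : E} (hs : closedBall x φ.rOut ⊆ s) :
    ∫ t in s, φ.normed μ (x - t) ∂μ = 1 := by
  rw [setIntegral_eq_integral_of_forall_compl_eq_zero, integral_sub_left_eq_self _ μ x,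
    φ.integral_normed]
  refine fun t ht => Function.notMem_support.1 fun hsupp => ht (hs ?_)
  rw [φ.support_normed_eq, mem_ball_zero_iff, ← dist_eq_norm'] at hsupp
  exact hsupp.le

theorem smoothedIndicator_le_indicator (a x : E) (r : ℝ) :
    smoothedIndicator φ μ a (r - φ.rOut) x ≤ (closedBall a r).indicator 1 x := by
  by_cases hx : x ∈ closedBall a r
  · rw [Set.indicator_of_mem hx, Pi.one_apply,
      ← setIntegral_normed_sub_eq_one φ μ (Set.subset_univ (closedBall x φ.rOut))]
    refine setIntegral_mono_set ?_ (ae_of_all _ fun t => φ.nonneg_normed _)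
      (Set.subset_univ _).eventuallyLE
    exact (φ.integrable_normed.comp_sub_left x).integrableOn
  · rw [Set.indicator_of_notMem hx, smoothedIndicator]
    refine (setIntegral_eq_zero_of_forall_eq_zero fun t ht => Function.notMem_support.1 ?_).le
    rw [φ.support_normed_eq, mem_ball_zero_iff, ← dist_eq_norm, not_lt]
    rw [mem_closedBall, not_le] at hx
    linarith [mem_closedBall.1 ht, dist_triangle x t a]

theorem indicator_le_smoothedIndicator (a x : E) (r : ℝ) :
    (closedBall a r).indicator 1 x ≤ smoothedIndicator φ μ a (r + φ.rOut) x := by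
  refine Set.indicator_le' (fun x hx => ?_) (fun x _ => ?_) x
  · refine (setIntegral_normed_sub_eq_one φ μ (closedBall_subset_closedBall' ?_)).ge
    linarith [mem_closedBall.1 hx]
  · exact integral_nonneg fun t => φ.nonneg_normed _

end Smoothing

section SmoothedWeight

variable {E F : Type*} [NormedAddCommGroup E] [NormedSpace ℝ E] [FiniteDimensional ℝ E]
  [MeasurableSpace E] (φ : ContDiffBump (0 : E)) (μ : Measure E) {f : F → ℂ}

/-- The function on `E × F` whose lattice sum along the slices `E × {0}` is the smoothed version
of the twisted weighted point set `∑ₚ 𝐞 (-k p.1) f p.2 δ_{p.1}`. -/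
noncomputable def smoothedWeight (k : StrongDual ℝ E) (f : F → ℂ) (z : E × F) : ℂ :=
  φ.normed μ z.1 * 𝐞 (-k z.1) * f z.2

theorem continuous_smoothedWeight [TopologicalSpace F] (k : StrongDual ℝ E) (hf : Continuous f) :
    Continuous (smoothedWeight φ μ k f) := by
  have := φ.continuous_normed (μ := μ)
  unfold smoothedWeight
  fun_prop

variable [BorelSpace E] [μ.IsAddHaarMeasure] [MeasurableSpace F] {ν : Measure F}

theorem isWienerAmalgam_smoothedWeight [NormedAddCommGroup F] (k : StrongDual ℝ E)
    (hf_decay : IsWienerAmalgam f ν) : IsWienerAmalgam (smoothedWeight φ μ k f) (μ.prod ν) := by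
  have hφ := isWienerAmalgam_of_hasCompactSupport (ν := μ) (φ.continuous_normed (μ := μ))
    φ.hasCompactSupport_normed
  refine IsWienerAmalgam.mul_prod (f := fun x => (φ.normed μ x : ℂ) * 𝐞 (-k x)) ?_ hf_decay
  exact hφ.mono fun x => by simp [Circle.norm_coe]

theorem integral_smoothedWeight_zero [SFinite ν] :
    ∫ z, smoothedWeight φ μ 0 f z ∂(μ.prod ν) = ∫ u, f u ∂ν := by
  have hφ : ∫ x, (φ.normed μ x : ℂ) ∂μ = 1 := by
    rw [integral_complex_ofReal, φ.integral_normed, ofReal_one]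
  have h := integral_prod_mul (μ := μ) (ν := ν) (fun x => (φ.normed μ x : ℂ)) f
  simpa [smoothedWeight, hφ] using h

end SmoothedWeight

section CutAndProject

variable {E F : Type*} [NormedAddCommGroup E] [NormedSpace ℝ E] [NormedAddCommGroup F]
  [NormedSpace ℝ F] (L : Submodule ℤ (E × F)) {f : F → ℂ}

theorem eq_zero_of_comp_inl_eq_zero {L : Submodule ℤ (E × F)}
    (hL : Dense (Prod.snd '' (L : Set (E × F)))) {ℓ : StrongDual ℝ (E × F)}
    (hℓ : ℓ ∈ integralDual L) (hℓ_inl : ℓ.comp (.inl ℝ E F) = 0) : ℓ = 0 := by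
  have hinl (x : E) : ℓ (x, 0) = 0 := DFunLike.congr_fun hℓ_inl x
  have hint (y : F) : ℓ (0, y) ∈ Set.range ((↑) : ℤ → ℝ) := by
    refine hL.induction (P := fun y => ℓ (0, y) ∈ Set.range ((↑) : ℤ → ℝ)) ?_
      (Int.isClosedEmbedding_coe_real.isClosed_range.preimage (by fun_prop)) y
    rintro _ ⟨p, hp, rfl⟩
    obtain ⟨n, hn⟩ := hℓ p hp
    refine ⟨n, ?_⟩
    rw [← hn, ← zero_add (ℓ (0, p.2)), ← hinl p.1, ← map_add, Prod.fst_add_snd]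
  by_contra hne
  obtain ⟨z, hz⟩ := exists_apply_eq_of_ne_zero hne (1 / 2)
  obtain ⟨n, hn⟩ := hint z.2
  rw [← Prod.fst_add_snd z, map_add, hinl, zero_add, ← hn] at hz
  have h2 : ((2 * n : ℤ) : ℝ) = (1 : ℤ) := by push_cast; linarith
  have := Int.cast_injective h2
  omega

variable [FiniteDimensional ℝ E] [MeasurableSpace E] [BorelSpace E] [FiniteDimensional ℝ F]
  [MeasurableSpace F] [BorelSpace F] (φ : ContDiffBump (0 : E)) (μ : Measure E)
  [μ.IsAddHaarMeasure] {ν : Measure F} [ν.IsAddHaarMeasure]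
  [DiscreteTopology L] [IsZLattice ℝ L]

theorem hasSum_smoothedIndicator (k : StrongDual ℝ E) (hf : Continuous f)
    (hf_decay : IsWienerAmalgam f ν) (a : E) (r : ℝ) :
    HasSum (fun p : L => smoothedIndicator φ μ a r p.1.1 • ((𝐞 (-k p.1.1) : ℂ) * f p.1.2))
      (∫ t in closedBall a r, 𝐞 (-k t) * periodization L (smoothedWeight φ μ k f) (t, 0) ∂μ) := by
  have : IsFiniteMeasure (μ.restrict (closedBall a r)) :=
    ⟨by simpa using measure_closedBall_lt_top⟩
  have hbound : ∀ t ∈ closedBall a r, ‖(t, (0 : F))‖ ≤ ‖a‖ + r := fun t ht => by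
    simpa using norm_le_norm_add_const_of_dist_le ht
  convert hasSum_integral_mul_periodization L (continuous_smoothedWeight φ μ k hf)
    (isWienerAmalgam_smoothedWeight φ μ k hf_decay) (κ := μ.restrict (closedBall a r))
    (τ := fun t => (t, 0)) (w := fun t => (𝐞 (-k t) : ℂ))
    (Continuous.aestronglyMeasurable (by fun_prop))
    (ae_restrict_of_forall_mem measurableSet_closedBall hbound)
    (Continuous.aestronglyMeasurable (by fun_prop)) (fun t => (Circle.norm_coe _).le) using 2 with p
  have hphase (t : E) : (𝐞 (-k p.1.1) : ℂ) = 𝐞 (-k t) * 𝐞 (-k (p.1.1 - t)) := by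
    rw [← Circle.coe_mul, ← AddChar.map_add_eq_mul, ← neg_add, ← map_add,
      add_sub_cancel]
  rw [smoothedIndicator, ← integral_smul_const]
  refine integral_congr_ae (ae_of_all _ fun t => ?_)
  simp only [smoothedWeight, real_smul, Prod.fst_sub, Prod.snd_sub, sub_zero]
  rw [hphase t]
  ring

theorem tendsto_tsum_smoothedIndicator (hL : Dense (Prod.snd '' (L : Set (E × F))))
    (hf : Continuous f) (hf_decay : IsWienerAmalgam f ν) (a : E) :
    Tendsto (fun r => (μ.real (closedBall a r))⁻¹ •
      ∑' p : L, smoothedIndicator φ μ a r p.1.1 • f p.1.2) atTop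
      (𝓝 ((ZLattice.covolume L (μ.prod ν))⁻¹ • ∫ u, f u ∂ν)) := by
  have hcont := continuous_smoothedWeight φ μ 0 hf
  have hdecay := isWienerAmalgam_smoothedWeight φ μ 0 hf_decay
  obtain ⟨D, hD_meas, hD_bdd, hD⟩ := exists_measurable_bounded_isAddFundamentalDomain L (μ.prod ν)
  have h := tendsto_setAverage_flow μ (.inl ℝ E F) a hD hD_bdd.measure_lt_top.ne
    (fun ℓ => eq_zero_of_comp_inl_eq_zero hL) (continuous_periodization L hcont hdecay)
    fun p hp => periodization_add_of_mem L _ hp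
  rw [setAverage_periodization L hcont hdecay hD_meas hD_bdd hD, integral_smoothedWeight_zero] at h
  refine h.congr fun r => ?_
  have hsum := hasSum_smoothedIndicator L φ μ 0 hf hf_decay a r
  simp only [zero_apply, neg_zero, AddChar.map_zero_eq_one, Circle.coe_one,
    one_mul] at hsum
  rw [setAverage_eq, hsum.tsum_eq]
  rfl

theorem tendsto_tsum_smoothedIndicator_twisted {k : StrongDual ℝ E}
    (hk : ∀ ℓ ∈ integralDual L, ℓ.comp (.inl ℝ E F) ≠ k)
    (hf : Continuous f) (hf_decay : IsWienerAmalgam f ν) (a : E) :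
    Tendsto (fun r => (μ.real (closedBall a r))⁻¹ •
      ∑' p : L, smoothedIndicator φ μ a r p.1.1 • ((𝐞 (-k p.1.1) : ℂ) * f p.1.2)) atTop (𝓝 0) := by
  refine (tendsto_setAverage_flow_twisted μ (.inl ℝ E F) a hk (continuous_periodization L
    (continuous_smoothedWeight φ μ k hf) (isWienerAmalgam_smoothedWeight φ μ k hf_decay))
    fun p hp => periodization_add_of_mem L _ hp).congr fun r => ?_
  rw [setAverage_eq, (hasSum_smoothedIndicator L φ μ k hf hf_decay a r).tsum_eq]
  rfl

/-- The average over the ball `closedBall a r` of the twisted weighted point set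
`∑ₚ 𝐞 (-k p.1) f p.2 δ_{p.1}` attached to the lattice `L`, whose limit as `r → ∞` is the
Fourier–Bohr coefficient at `k`. -/
noncomputable def fourierBohrAverage (f : F → ℂ) (k : StrongDual ℝ E) (a : E) (r : ℝ) : ℂ :=
  (μ.real (closedBall a r))⁻¹ •
    ∑' p : L, (closedBall a r).indicator (fun x => (𝐞 (-k x) : ℂ) * f p.1.2) p.1.1

theorem tendsto_tsum_smoothedIndicator_norm (hL : Dense (Prod.snd '' (L : Set (E × F))))
    (hf : Continuous f) (hf_decay : IsWienerAmalgam f ν) (a : E) :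
    Tendsto (fun r => (μ.real (closedBall a r))⁻¹ •
      ∑' p : L, smoothedIndicator φ μ a r p.1.1 * ‖f p.1.2‖) atTop
      (𝓝 ((ZLattice.covolume L (μ.prod ν))⁻¹ • ∫ u, ‖f u‖ ∂ν)) := by
  have h := tendsto_tsum_smoothedIndicator L φ μ hL (f := fun u => (‖f u‖ : ℂ)) (by fun_prop)
    (hf_decay.mono fun u => by simp) a
  rw [← tendsto_ofReal_iff]
  simpa [integral_complex_ofReal, ofReal_tsum] using h

theorem tendsto_fourierBohrAverage_of_smoothedIndicator {φ : ContDiffBump (0 : E)}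
    (hL : Dense (Prod.snd '' (L : Set (E × F)))) (hf : Continuous f)
    (hf_decay : IsWienerAmalgam f ν) {k : StrongDual ℝ E} {a : E} {c : ℂ}
    (hc : Tendsto (fun r => (μ.real (closedBall a r))⁻¹ • ∑' p : L,
      smoothedIndicator φ μ a r p.1.1 • ((𝐞 (-k p.1.1) : ℂ) * f p.1.2)) atTop (𝓝 c)) :
    Tendsto (fourierBohrAverage L μ f k a) atTop (𝓝 c) := by
  have hnorm (p : L) : ‖(𝐞 (-k p.1.1) : ℂ) * f p.1.2‖ = ‖f p.1.2‖ := by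
    rw [norm_mul, Circle.norm_coe, one_mul]
  have hsum (r : ℝ) : Summable fun p : L => smoothedIndicator φ μ a r p.1.1 *
      ‖(𝐞 (-k p.1.1) : ℂ) * f p.1.2‖ :=
    .of_norm ((hasSum_smoothedIndicator L φ μ k hf hf_decay a r).summable.norm.congr
      fun p => by simp only [norm_smul, norm_mul, norm_norm])
  refine (tendsto_inv_smul_tsum_of_le_of_le
    (A := (ZLattice.covolume L (μ.prod ν))⁻¹ • ∫ u, ‖f u‖ ∂ν)
    (tendsto_measureReal_closedBall_add_div μ a a)
    (fun r p => smoothedIndicator_le_indicator φ μ a p.1.1 r)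
    (fun r p => indicator_le_smoothedIndicator φ μ a p.1.1 r) hsum ?_ hc).congr fun r => ?_
  · simpa only [hnorm] using tendsto_tsum_smoothedIndicator_norm L φ μ hL hf hf_decay a
  · refine congrArg _ (tsum_congr fun p => ?_)
    by_cases hp : p.1.1 ∈ closedBall a r <;> simp only [Set.indicator_of_mem,
      Set.indicator_of_notMem, hp, Pi.one_apply, one_smul, zero_smul, not_false_eq_true]

theorem tendsto_fourierBohrAverage_of_mem (hL : Dense (Prod.snd '' (L : Set (E × F))))
    (hf : Continuous f) (hf_decay : IsWienerAmalgam f ν) {ℓ : StrongDual ℝ (E × F)}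
    (hℓ : ℓ ∈ integralDual L) (a : E) :
    Tendsto (fourierBohrAverage L μ f (ℓ.comp (.inl ℝ E F)) a) atTop
      (𝓝 ((ZLattice.covolume L (μ.prod ν))⁻¹ • ∫ u, 𝐞 (ℓ (0, u)) * f u ∂ν)) := by
  refine tendsto_fourierBohrAverage_of_smoothedIndicator L μ (φ := default) hL hf hf_decay ?_
  have hphase (p : L) : 𝐞 (-ℓ (p.1.1, 0)) = 𝐞 (ℓ (0, p.1.2)) := by
    rw [← map_neg, ← fourierChar_apply_add_of_mem_integralDual hℓ p.2]
    congr 2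
    ext <;> simp
  simpa only [ContinuousLinearMap.comp_apply, ContinuousLinearMap.inl_apply, hphase] using
    tendsto_tsum_smoothedIndicator L default μ hL (f := fun u => 𝐞 (ℓ (0, u)) * f u)
      (by fun_prop) (hf_decay.mono fun u => by simp [Circle.norm_coe]) a

theorem tendsto_fourierBohrAverage_of_forall_ne (hL : Dense (Prod.snd '' (L : Set (E × F))))
    (hf : Continuous f) (hf_decay : IsWienerAmalgam f ν) {k : StrongDual ℝ E}
    (hk : ∀ ℓ ∈ integralDual L, ℓ.comp (.inl ℝ E F) ≠ k) (a : E) :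
    Tendsto (fourierBohrAverage L μ f k a) atTop (𝓝 0) :=
  tendsto_fourierBohrAverage_of_smoothedIndicator L μ hL hf hf_decay
    (tendsto_tsum_smoothedIndicator_twisted L default μ hk hf hf_decay a)

end CutAndProject

section PointSet

variable {E F : Type*} [NormedAddCommGroup E] [InnerProductSpace ℝ E] [MeasurableSpace E]
  [BorelSpace E] [NormedAddCommGroup F] (L : Submodule ℤ (E × F)) (μ : Measure E)
  [μ.IsAddHaarMeasure] {f : F → ℂ} {star : E → F}

theorem fourierChar_eq_exp_two_pi_mul_I_mul (x : ℝ) :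
    (𝐞 x : ℂ) = exp (2 * Real.pi * I * (x : ℂ)) := by
  rw [Real.fourierChar_apply]
  push_cast
  ring_nf

theorem inv_smul_tsum_eq_fourierBohrAverage (hstar : ∀ p ∈ L, star p.1 = p.2) (k a : E) (r : ℝ) :
    (μ (closedBall 0 r)).toReal⁻¹ • ∑' x : (Prod.fst '' (L : Set (E × F)) ∩ closedBall a r : Set E),
      f (star x) * exp (-(2 * Real.pi * I * ((⟪k, (x : E)⟫ : ℝ) : ℂ))) =
    fourierBohrAverage L μ f (innerSL ℝ k) a r := by
  have hinj : Set.InjOn Prod.fst (L : Set (E × F)) := fun p hp q hq hpq =>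
    Prod.ext hpq (by rw [← hstar p hp, ← hstar q hq, hpq])
  let h (x : E) : ℂ := f (star x) * exp (-(2 * Real.pi * I * ((⟪k, x⟫ : ℝ) : ℂ)))
  have htsum : ∑' x : (Prod.fst '' (L : Set (E × F)) ∩ closedBall a r : Set E), h x =
      ∑' p : L, (closedBall a r).indicator h p.1.1 := by
    rw [tsum_subtype (_ ∩ _) h, ← Set.indicator_indicator, ← tsum_subtype]
    exact tsum_image _ hinj
  rw [fourierBohrAverage, Measure.addHaar_real_closedBall_center, measureReal_def]
  refine congrArg _ (htsum.trans (tsum_congr fun p => ?_))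
  by_cases hp : p.1.1 ∈ closedBall a r
  · rw [Set.indicator_of_mem hp, Set.indicator_of_mem hp, fourierChar_eq_exp_two_pi_mul_I_mul,
      innerSL_apply_apply, ofReal_neg, mul_neg, mul_comm, ← hstar p.1 p.2]
  · rw [Set.indicator_of_notMem hp, Set.indicator_of_notMem hp]

end PointSet

section InnerProduct

variable {E F : Type*} [NormedAddCommGroup E] [InnerProductSpace ℝ E] [NormedAddCommGroup F]
  [InnerProductSpace ℝ F] (L : Submodule ℤ (E × F))

/-- The dual of `L` for the pairing `⟪y.1, x.1⟫ + ⟪y.2, x.2⟫` on `E × F`. -/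
def dualLattice : Set (E × F) :=
  {y | ∀ x ∈ L, ∃ n : ℤ, ⟪y.1, x.1⟫ + ⟪y.2, x.2⟫ = (n : ℝ)}

/-- The functional on `E × F` represented by `y`; there is no inner product on `E × F` itself,
whose norm is the supremum norm. -/
noncomputable def innerProdSL (y : E × F) : StrongDual ℝ (E × F) :=
  (innerSL ℝ y.1).coprod (innerSL ℝ y.2)

theorem innerProdSL_apply (y x : E × F) : innerProdSL y x = ⟪y.1, x.1⟫ + ⟪y.2, x.2⟫ := rfl

theorem innerProdSL_comp_inl (y : E × F) : (innerProdSL y).comp (.inl ℝ E F) = innerSL ℝ y.1 := by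
  ext x
  simp [innerProdSL]

theorem innerProdSL_mem_integralDual {y : E × F} :
    innerProdSL y ∈ integralDual L ↔ y ∈ dualLattice L := Iff.rfl

theorem innerProdSL_surjective [CompleteSpace E] [CompleteSpace F] :
    Function.Surjective (innerProdSL : E × F → StrongDual ℝ (E × F)) := fun ℓ => by
  refine ⟨((InnerProductSpace.toDual ℝ E).symm (ℓ.comp (.inl ℝ E F)),
    (InnerProductSpace.toDual ℝ F).symm (ℓ.comp (.inr ℝ E F))), ?_⟩
  ext x
  · simp [innerProdSL]
  · simp [innerProdSL]

variable [FiniteDimensional ℝ E] [MeasurableSpace E] [BorelSpace E] [FiniteDimensional ℝ F]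
  [MeasurableSpace F] [BorelSpace F] (μ : Measure E) [μ.IsAddHaarMeasure]
  {ν : Measure F} [ν.IsAddHaarMeasure] {f : F → ℂ} {star : E → F}

theorem fourier_bohr_dense_point_sets_general [DiscreteTopology L] [IsZLattice ℝ L]
    (hL : Dense (Prod.snd '' (L : Set (E × F)))) (hstar : ∀ p ∈ L, star p.1 = p.2)
    {starD : E → F} (hstarD : ∀ p ∈ dualLattice L, starD p.1 = p.2) (hf : Continuous f)
    (hf_decay : IsWienerAmalgam f ν) :
    ∃ cval : E → ℂ,
      (∀ k a : E, Tendsto (fun r : ℝ => (μ (closedBall 0 r)).toReal⁻¹ •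
        ∑' x : (Prod.fst '' (L : Set (E × F)) ∩ closedBall a r : Set E),
          f (star x) * exp (-(2 * Real.pi * I * ((⟪k, (x : E)⟫ : ℝ) : ℂ)))) atTop (𝓝 (cval k))) ∧
      (∀ k ∈ Prod.fst '' dualLattice L, cval k = (ZLattice.covolume L (μ.prod ν))⁻¹ •
        ∫ u, exp (2 * Real.pi * I * ((⟪starD k, u⟫ : ℝ) : ℂ)) * f u ∂ν) ∧
      ∀ k ∉ Prod.fst '' dualLattice L, cval k = 0 := by
  classical
  let c (k : E) : ℂ := (ZLattice.covolume L (μ.prod ν))⁻¹ •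
    ∫ u, exp (2 * Real.pi * I * ((⟪starD k, u⟫ : ℝ) : ℂ)) * f u ∂ν
  refine ⟨fun k => if k ∈ Prod.fst '' dualLattice L then c k else 0, fun k a => ?_,
    fun k hk => if_pos hk, fun k hk => if_neg hk⟩
  simp only [inv_smul_tsum_eq_fourierBohrAverage L μ hstar]
  split_ifs with hk
  · obtain ⟨y, hy, rfl⟩ := hk
    have h := tendsto_fourierBohrAverage_of_mem L μ hL hf hf_decay
      ((innerProdSL_mem_integralDual L).2 hy) a
    simpa only [c, innerProdSL_comp_inl, innerProdSL_apply, inner_zero_right, zero_add,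
      hstarD y hy, fourierChar_eq_exp_two_pi_mul_I_mul] using h
  · refine tendsto_fourierBohrAverage_of_forall_ne L μ hL hf hf_decay (fun ℓ hℓ hℓk => hk ?_) a
    obtain ⟨y, rfl⟩ := innerProdSL_surjective ℓ
    rw [innerProdSL_comp_inl] at hℓk
    exact ⟨y, (innerProdSL_mem_integralDual L).1 hℓ, innerSL_inj.1 hℓk⟩

end InnerProduct

end Development

/-- Fourier–Bohr coefficients for dense point sets: the exponential
ball averages converge, independently of a, to (1/|det L̃|)·f̂(−k*) for k in the
projected dual module L*, and to 0 otherwise. -/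
theorem fourier_bohr_dense_point_sets (d m : ℕ)
    (L : Submodule ℤ (EuclideanSpace ℝ (Fin d) × EuclideanSpace ℝ (Fin m)))
    [DiscreteTopology L] [IsZLattice ℝ L]
    (hinj1 : Set.InjOn Prod.fst (L : Set (EuclideanSpace ℝ (Fin d) × EuclideanSpace ℝ (Fin m))))
    (hdense1 : Dense (physL d m L))
    (hinj2 : Set.InjOn Prod.snd (L : Set (EuclideanSpace ℝ (Fin d) × EuclideanSpace ℝ (Fin m))))
    (hdense2 : Dense (Prod.snd '' (L : Set (EuclideanSpace ℝ (Fin d) × EuclideanSpace ℝ (Fin m)))))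
    (star : EuclideanSpace ℝ (Fin d) → EuclideanSpace ℝ (Fin m))
    (hstar : ∀ p ∈ L, star (Prod.fst p) = Prod.snd p)
    (starD : EuclideanSpace ℝ (Fin d) → EuclideanSpace ℝ (Fin m))
    (hinjD : Set.InjOn Prod.fst (dualL d m L))
    (hstarD : ∀ p ∈ dualL d m L, starD (Prod.fst p) = Prod.snd p)
    (f : EuclideanSpace ℝ (Fin m) → ℂ) (hf : Continuous f)
    (C α : ℝ) (hC : 0 < C) (hα : 0 < α)
    (hdecay : ∀ x : EuclideanSpace ℝ (Fin m), ‖x‖ ^ ((m : ℝ) + 1 + α) * ‖f x‖ ≤ C) :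
    ∃ cval : EuclideanSpace ℝ (Fin d) → ℂ,
      (∀ (k a : EuclideanSpace ℝ (Fin d)),
        Filter.Tendsto
          (fun r : ℝ => (volume (closedBall (0 : EuclideanSpace ℝ (Fin d)) r)).toReal⁻¹ •
            (∑' x : ((physL d m L ∩ closedBall a r : Set (EuclideanSpace ℝ (Fin d)))),
              f (star (x : EuclideanSpace ℝ (Fin d))) *
                Complex.exp (-(2 * Real.pi * Complex.I *
                  ((⟪k, (x : EuclideanSpace ℝ (Fin d))⟫ : ℝ) : ℂ)))))
          Filter.atTop (nhds (cval k))) ∧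
      (∀ k ∈ Prod.fst '' dualL d m L,
        cval k = (ZLattice.covolume L volume)⁻¹ •
          ∫ u, Complex.exp (2 * Real.pi * Complex.I * ((⟪starD k, u⟫ : ℝ) : ℂ)) * f u) ∧
      (∀ k ∉ Prod.fst '' dualL d m L, cval k = 0) :=
  fourier_bohr_dense_point_sets_general L volume hdense2 hstar hstarD hf
    (isWienerAmalgam_of_rpow_mul_norm_le (by rw [finrank_euclideanSpace_fin]; linarith) hf hdecay)
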